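/- Let (𝒳, μ) be a measure space, let σ₁, σ₀ : 𝒳 → (0,∞) be measurable, and let q : 𝒳 → [0,∞) be a measurable probability density with respect to μ such that 0 < ∫ (σ₁ + σ₀) q dμ < ∞. Define the efficient propensity score w*(1|x) = σ₁(x)/(σ₁(x)+σ₀(x)), w*(0|x) = σ₀(x)/(σ₁(x)+σ₀(x)), and the efficient covariate density p*(x) = (σ₁(x)+σ₀(x)) q(x) / ∫ (σ₁+σ₀) q dμ. Then p* is a probability density with respect to μ, and the efficiency bound at (w*, p*) satisfies ∫ (σ₁(x)²/w*(1|x) + σ₀(x)²/w*(0|x)) · q(x)²/p*(x) dμ(x) = (∫ (σ₁(x)+σ₀(x)) q(x) dμ(x))². -/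

import Mathlib

open MeasureTheory

/-!
Write `S = ∑ᵢ σᵢ` and `I = ∫ S q`. Under `w*` each treatment contributes `σᵢ² / (σᵢ / S) = σᵢ S`, so
the conditional variance factor is `S²`; under `p*` the integrand `(S q)² / (S q / I)` is then the
constant multiple `I (S q)` of `S q`, whose integral is `I²`.
-/

theorem sum_sq_div_div_sum {ι K : Type*} [Field K] (s : Finset ι) {a : ι → K}
    (ha : ∀ i ∈ s, a i ≠ 0) :
    ∑ i ∈ s, a i ^ 2 / (a i / ∑ j ∈ s, a j) = (∑ i ∈ s, a i) ^ 2 := by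
  have summand_eq : ∀ i ∈ s, a i ^ 2 / (a i / ∑ j ∈ s, a j) = a i * ∑ j ∈ s, a j := fun i hi => by
    rw [div_div_eq_mul_div, sq, mul_assoc, mul_div_cancel_left₀ _ (ha i hi)]
  rw [Finset.sum_congr rfl summand_eq, ← Finset.sum_mul, sq]

section EfficientDesign

variable {𝒳 ι : Type*} [MeasurableSpace 𝒳] [Fintype ι]

theorem integral_div_integral_self {μ : Measure 𝒳} {f : 𝒳 → ℝ} (hf : ∫ x, f x ∂μ ≠ 0) :
    ∫ x, f x / ∫ y, f y ∂μ ∂μ = 1 := by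
  rw [integral_div, div_self hf]

theorem integral_sq_div_div_integral (μ : Measure 𝒳) (f : 𝒳 → ℝ) :
    ∫ x, f x ^ 2 / (f x / ∫ y, f y ∂μ) ∂μ = (∫ x, f x ∂μ) ^ 2 := by
  -- `mul_self_div_self` also covers the zeros of `f`, where the integrand is `0 / 0 = 0`.
  have integrand_eq (x : 𝒳) : f x ^ 2 / (f x / ∫ y, f y ∂μ) = f x * ∫ y, f y ∂μ := by
    rw [div_div_eq_mul_div, mul_div_right_comm, sq, mul_self_div_self]
  simp_rw [integrand_eq]
  rw [integral_mul_const, sq]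

/-- The semiparametric efficiency bound `τ(w, p)` for finitely many treatments `i : ι` with
conditional standard deviations `σ i`, as a functional of the propensity score `w i x = w(i|x)` and
the sampling covariate density `p`; `q` is the target covariate density. Where `p` or some `w i`
vanishes, the corresponding quotient is `0` rather than `∞`. -/
noncomputable def efficiencyBound (μ : Measure 𝒳) (σ : ι → 𝒳 → ℝ) (q : 𝒳 → ℝ)
    (w : ι → 𝒳 → ℝ) (p : 𝒳 → ℝ) : ℝ :=
  ∫ x, (∑ i, σ i x ^ 2 / w i x) * (q x ^ 2 / p x) ∂μ

/-- The efficient propensity score `w*(i|x)`, proportional to the standard deviations `σ i x`. -/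
noncomputable def efficientPropensity (σ : ι → 𝒳 → ℝ) (i : ι) (x : 𝒳) : ℝ :=
  σ i x / ∑ j, σ j x

/-- The efficient covariate density `p*`: the target density `q` reweighted by the total standard
deviation `∑ i, σ i` and normalized. -/
noncomputable def efficientDensity (μ : Measure 𝒳) (σ : ι → 𝒳 → ℝ) (q : 𝒳 → ℝ) (x : 𝒳) : ℝ :=
  (∑ i, σ i x) * q x / ∫ y, (∑ i, σ i y) * q y ∂μ

theorem efficiencyBound_efficientPropensity (μ : Measure 𝒳) {σ : ι → 𝒳 → ℝ} (q p : 𝒳 → ℝ)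
    (hσ : ∀ i x, σ i x ≠ 0) :
    efficiencyBound μ σ q (efficientPropensity σ) p =
      ∫ x, ((∑ i, σ i x) * q x) ^ 2 / p x ∂μ := by
  simp only [efficiencyBound, efficientPropensity, mul_pow, mul_div_assoc,
    sum_sq_div_div_sum Finset.univ fun i _ => hσ i _]

theorem minimized_efficiency_bound_value_general (μ : Measure 𝒳) (σ : ι → 𝒳 → ℝ) (q : 𝒳 → ℝ)
    (hσ : ∀ i x, 0 < σ i x) (hI : ∫ x, (∑ i, σ i x) * q x ∂μ ≠ 0) :
    ∫ x, efficientDensity μ σ q x ∂μ = 1 ∧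
      efficiencyBound μ σ q (efficientPropensity σ) (efficientDensity μ σ q) =
        (∫ x, (∑ i, σ i x) * q x ∂μ) ^ 2 := by
  refine ⟨integral_div_integral_self hI, ?_⟩
  rw [efficiencyBound_efficientPropensity μ q _ fun i x => (hσ i x).ne']
  exact integral_sq_div_div_integral μ _

end EfficientDesign

/-- The efficient propensity score `w*(1|x) = σ₁(x)/(σ₁(x)+σ₀(x))`,
`w*(0|x) = σ₀(x)/(σ₁(x)+σ₀(x))` and the efficient covariate density
`p*(x) = (σ₁(x)+σ₀(x)) q(x) / ∫ (σ₁+σ₀) q dμ` form a probability density, and the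
efficiency bound at `(w*, p*)` equals `(∫ (σ₁+σ₀) q dμ)²`. -/
theorem minimized_efficiency_bound_value
    {𝒳 : Type*} [MeasurableSpace 𝒳] (μ : Measure 𝒳)
    (σ₁ σ₀ q : 𝒳 → ℝ)
    (hσ₁m : Measurable σ₁) (hσ₀m : Measurable σ₀)
    (hσ₁ : ∀ x, 0 < σ₁ x) (hσ₀ : ∀ x, 0 < σ₀ x)
    (hqm : Measurable q) (hq0 : ∀ x, 0 ≤ q x)
    (hqint : Integrable q μ) (hq1 : ∫ x, q x ∂μ = 1)
    (hint : Integrable (fun x => (σ₁ x + σ₀ x) * q x) μ)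
    (hpos : 0 < ∫ x, (σ₁ x + σ₀ x) * q x ∂μ) :
    (∫ x, (σ₁ x + σ₀ x) * q x / (∫ y, (σ₁ y + σ₀ y) * q y ∂μ) ∂μ = 1) ∧
    ∫ x, (σ₁ x ^ 2 / (σ₁ x / (σ₁ x + σ₀ x)) + σ₀ x ^ 2 / (σ₀ x / (σ₁ x + σ₀ x))) *
        (q x ^ 2 / ((σ₁ x + σ₀ x) * q x / (∫ y, (σ₁ y + σ₀ y) * q y ∂μ))) ∂μ =
      (∫ x, (σ₁ x + σ₀ x) * q x ∂μ) ^ 2 := by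
  simpa [efficiencyBound, efficientPropensity, efficientDensity] using
    minimized_efficiency_bound_value_general μ ![σ₁, σ₀] q
      (Fin.forall_fin_two.2 ⟨hσ₁, hσ₀⟩) (by simpa using hpos.ne')
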